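/- arXiv:2505.14611 — 4 statements merged into one kernel-verified Lean document; each statement's English description precedes it below -/
import Mathlib

section
/- Suppose ρ and ψ are twice continuously differentiable in their parameters, and let ς ↦ (φ(ς), ϕ(ς)) be a twice differentiable curve. Write r(ς,ν) := ρ(φ(ς),ν) and p(ς,ν) := ψ(ϕ(ς),ν). Then at every ς the following are equivalent: (i) the geodesic system holds, i.e. for every u ∈ {1,…,P}, g_{uv}·d²φ^v/dς² + Γ_{u'v',u}·(dφ^{u'}/dς)(dφ^{v'}/dς) + Γ_{q'r',u}·(dϕ^{q'}/dς)(dϕ^{r'}/dς) = 0 (summed over repeated indices), and for every q ∈ {P+1,…,N}, g_{qr}·d²ϕ^r/dς² + Γ_{q'r',q}·(dϕ^{q'}/dς)(dϕ^{r'}/dς) + 2·Γ_{q'u',q}·(dϕ^{q'}/dς)(dφ^{u'}/dς) = 0; (ii) Σ_{ν∈B} (2/γ0(ν))·( ∂²r/∂ς² − r·(∂p/∂ς)² )·∇_φ ρ(φ(ς),ν) = 0 in ℝ^P, and Σ_{ν∈B} (2/γ0(ν))·( r²·∂²p/∂ς² + 2·r·(∂r/∂ς)·(∂p/∂ς) )·∇_ϕ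 ψ(ϕ(ς),ν) = 0 in ℝ^(N−P). -/
noncomputable section

/-- Partial derivative in the `i`-th coordinate direction. -/
def dP {n : ℕ} {E : Type*} [NormedAddCommGroup E] [NormedSpace ℝ E]
    (f : (Fin n → ℝ) → E) (x : Fin n → ℝ) (i : Fin n) : E :=
  fderiv ℝ f x (Pi.single i 1)

variable {P Q : ℕ} {B : Type*} [Fintype B]

/-- ∂ρ/∂φ^u. -/
def Drho (ρ : (Fin P → ℝ) → B → ℝ) (φ : Fin P → ℝ) (ν : B) (u : Fin P) : ℝ :=
  dP (fun φ' => ρ φ' ν) φ u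

/-- ∂²ρ/∂φ^u∂φ^v. -/
def D2rho (ρ : (Fin P → ℝ) → B → ℝ) (φ : Fin P → ℝ) (ν : B) (u v : Fin P) : ℝ :=
  dP (fun φ' => Drho ρ φ' ν v) φ u

/-- ∂ψ/∂ϕ^q. -/
def Dpsi (ψ : (Fin Q → ℝ) → B → ℝ) (ϕ : Fin Q → ℝ) (ν : B) (q : Fin Q) : ℝ :=
  dP (fun ϕ' => ψ ϕ' ν) ϕ q

/-- ∂²ψ/∂ϕ^q∂ϕ^r. -/
def D2psi (ψ : (Fin Q → ℝ) → B → ℝ) (ϕ : Fin Q → ℝ) (ν : B) (q r : Fin Q) : ℝ :=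
  dP (fun ϕ' => Dpsi ψ ϕ' ν r) ϕ q

/-- Magnitude block of the Fisher matrix. -/
def gRho (γ0 : B → ℝ) (ρ : (Fin P → ℝ) → B → ℝ) (φ : Fin P → ℝ) (u v : Fin P) : ℝ :=
  ∑ ν : B, (2 / γ0 ν) * Drho ρ φ ν u * Drho ρ φ ν v

/-- Phase block of the Fisher matrix. -/
def gPsi (γ0 : B → ℝ) (ρ : (Fin P → ℝ) → B → ℝ) (ψ : (Fin Q → ℝ) → B → ℝ)
    (φ : Fin P → ℝ) (ϕ : Fin Q → ℝ) (q r : Fin Q) : ℝ :=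
  ∑ ν : B, (2 / γ0 ν) * (ρ φ ν)^2 * Dpsi ψ ϕ ν q * Dpsi ψ ϕ ν r

/-- Christoffel symbol Γ_{u'v',u}. -/
def Γrr (γ0 : B → ℝ) (ρ : (Fin P → ℝ) → B → ℝ) (φ : Fin P → ℝ) (u' v' u : Fin P) : ℝ :=
  ∑ ν : B, (2 / γ0 ν) * Drho ρ φ ν u * D2rho ρ φ ν u' v'

/-- Christoffel symbol Γ_{q'r',u}. -/
def Γppu (γ0 : B → ℝ) (ρ : (Fin P → ℝ) → B → ℝ) (ψ : (Fin Q → ℝ) → B → ℝ)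
    (φ : Fin P → ℝ) (ϕ : Fin Q → ℝ) (q' r' : Fin Q) (u : Fin P) : ℝ :=
  -∑ ν : B, (2 / γ0 ν) * ρ φ ν * Drho ρ φ ν u * Dpsi ψ ϕ ν q' * Dpsi ψ ϕ ν r'

/-- Christoffel symbol Γ_{q'r',q}. -/
def Γppq (γ0 : B → ℝ) (ρ : (Fin P → ℝ) → B → ℝ) (ψ : (Fin Q → ℝ) → B → ℝ)
    (φ : Fin P → ℝ) (ϕ : Fin Q → ℝ) (q' r' q : Fin Q) : ℝ :=
  ∑ ν : B, (2 / γ0 ν) * (ρ φ ν)^2 * Dpsi ψ ϕ ν q * D2psi ψ ϕ ν q' r'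

/-- Christoffel symbol Γ_{q'u,q} = Γ_{uq',q}. -/
def Γpuq (γ0 : B → ℝ) (ρ : (Fin P → ℝ) → B → ℝ) (ψ : (Fin Q → ℝ) → B → ℝ)
    (φ : Fin P → ℝ) (ϕ : Fin Q → ℝ) (q' : Fin Q) (u : Fin P) (q : Fin Q) : ℝ :=
  ∑ ν : B, (2 / γ0 ν) * ρ φ ν * Drho ρ φ ν u * Dpsi ψ ϕ ν q * Dpsi ψ ϕ ν q'

/-- The geodesic system of the Fisher metric along the curve `ς ↦ (φc ς, ϕc ς)`, at `ς`. -/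
def GeodesicSystem (γ0 : B → ℝ) (ρ : (Fin P → ℝ) → B → ℝ) (ψ : (Fin Q → ℝ) → B → ℝ)
    (φc : ℝ → Fin P → ℝ) (ϕc : ℝ → Fin Q → ℝ) (ς : ℝ) : Prop :=
  (∀ u : Fin P,
    (∑ v, gRho γ0 ρ (φc ς) u v * deriv (deriv (fun t => φc t v)) ς) +
    (∑ u', ∑ v', Γrr γ0 ρ (φc ς) u' v' u *
      deriv (fun t => φc t u') ς * deriv (fun t => φc t v') ς) +
    (∑ q', ∑ r', Γppu γ0 ρ ψ (φc ς) (ϕc ς) q' r' u *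
      deriv (fun t => ϕc t q') ς * deriv (fun t => ϕc t r') ς) = 0) ∧
  (∀ q : Fin Q,
    (∑ r, gPsi γ0 ρ ψ (φc ς) (ϕc ς) q r * deriv (deriv (fun t => ϕc t r)) ς) +
    (∑ q', ∑ r', Γppq γ0 ρ ψ (φc ς) (ϕc ς) q' r' q *
      deriv (fun t => ϕc t q') ς * deriv (fun t => ϕc t r') ς) +
    2 * (∑ q', ∑ u', Γpuq γ0 ρ ψ (φc ς) (ϕc ς) q' u' q *
      deriv (fun t => ϕc t q') ς * deriv (fun t => φc t u') ς) = 0)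

/-!
Contracting the Fisher matrix and the Christoffel symbols with the velocity and the acceleration of
the curve turns each of them into a sum over bins of first and second Fréchet derivatives of the
magnitude and the phase. Grouped bin by bin, these are the derivatives along the curve:
`dr/dς = Dρ(φ')`, `d²r/dς² = D²ρ(φ', φ') + Dρ(φ'')`, and likewise for the phase. The two systems
therefore agree term by term.
-/

open Filter Topology

section TwiceDifferentiable

variable {𝕜 : Type*} [NontriviallyNormedField 𝕜]
  {E : Type*} [NormedAddCommGroup E] [NormedSpace 𝕜 E]
  {F : Type*} [NormedAddCommGroup F] [NormedSpace 𝕜 F]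

variable (𝕜) in
/-- Twice differentiability at a point. Differentiability is required on a neighbourhood, because
`fderiv` takes the value `0` at points of non-differentiability. -/
def TwiceDifferentiableAt (f : E → F) (x : E) : Prop :=
  (∀ᶠ y in 𝓝 x, DifferentiableAt 𝕜 f y) ∧ DifferentiableAt 𝕜 (fderiv 𝕜 f) x

namespace TwiceDifferentiableAt

theorem differentiableAt {f : E → F} {x : E} (hf : TwiceDifferentiableAt 𝕜 f x) :
    DifferentiableAt 𝕜 f x :=
  hf.1.self_of_nhds

theorem of_contDiffAt {f : E → F} {x : E} (hf : ContDiffAt 𝕜 2 f x) :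
    TwiceDifferentiableAt 𝕜 f x :=
  ⟨(hf.eventually (by simp)).mono fun _ hy => hy.differentiableAt two_ne_zero,
    (hf.fderiv_right (m := 1) (by norm_num)).differentiableAt one_ne_zero⟩

theorem iff_deriv {c : 𝕜 → E} {t : 𝕜} :
    TwiceDifferentiableAt 𝕜 c t ↔
      (∀ᶠ s in 𝓝 t, DifferentiableAt 𝕜 c s) ∧ DifferentiableAt 𝕜 (deriv c) t := by
  have fderiv_eq : fderiv 𝕜 c = ContinuousLinearMap.toSpanSingletonLIE 𝕜 E ∘ deriv c :=
    funext fun s => (toSpanSingleton_deriv (f := c) (x := s)).symm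
  rw [TwiceDifferentiableAt, fderiv_eq, LinearIsometryEquiv.comp_differentiableAt_iff]

theorem deriv_deriv_comp {f : E → F} {c : 𝕜 → E} {t : 𝕜}
    (hf : TwiceDifferentiableAt 𝕜 f (c t)) (hc : TwiceDifferentiableAt 𝕜 c t) :
    deriv (deriv fun s => f (c s)) t =
      fderiv 𝕜 (fderiv 𝕜 f) (c t) (deriv c t) (deriv c t) +
        fderiv 𝕜 f (c t) (deriv (deriv c) t) := by
  have first_order : deriv (fun s => f (c s)) =ᶠ[𝓝 t] fun s => fderiv 𝕜 f (c s) (deriv c s) := by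
    filter_upwards [hc.differentiableAt.continuousAt.eventually hf.1, hc.1] with s hfs hcs
    exact fderiv_comp_deriv s hfs hcs
  have hDf : HasDerivAt (fun s => fderiv 𝕜 f (c s))
      (fderiv 𝕜 (fderiv 𝕜 f) (c t) (deriv c t)) t :=
    hf.2.hasFDerivAt.comp_hasDerivAt t hc.differentiableAt.hasDerivAt
  rw [first_order.deriv_eq]
  exact (hDf.clm_apply (iff_deriv.1 hc).2.hasDerivAt).deriv

end TwiceDifferentiableAt

variable {ι : Type*} {G : ι → Type*} [∀ i, NormedAddCommGroup (G i)]
  [∀ i, NormedSpace 𝕜 (G i)] {c : 𝕜 → ∀ i, G i} {t : 𝕜}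

theorem deriv_coord [Finite ι] (hc : DifferentiableAt 𝕜 c t) (i : ι) :
    deriv (fun s => c s i) t = deriv c t i := by
  cases nonempty_fintype ι
  exact (hasDerivAt_pi.1 hc.hasDerivAt i).deriv

namespace TwiceDifferentiableAt

variable [Fintype ι]

theorem deriv_deriv_coord (hc : TwiceDifferentiableAt 𝕜 c t) (i : ι) :
    deriv (deriv fun s => c s i) t = deriv (deriv c) t i := by
  have first_order : deriv (fun s => c s i) =ᶠ[𝓝 t] fun s => deriv c s i :=
    hc.1.mono fun _ hs => deriv_coord hs i
  rw [first_order.deriv_eq, deriv_coord (iff_deriv.1 hc).2]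

theorem of_coord (hc : ∀ i, TwiceDifferentiableAt 𝕜 (fun s => c s i) t) :
    TwiceDifferentiableAt 𝕜 c t := by
  have coord_eventually : ∀ᶠ s in 𝓝 t, ∀ i, DifferentiableAt 𝕜 (fun r => c r i) s :=
    eventually_all.2 fun i => (hc i).1
  have deriv_eq : deriv c =ᶠ[𝓝 t] fun s i => deriv (fun r => c r i) s :=
    coord_eventually.mono fun _ hs => deriv_pi hs
  have coord_derivs : DifferentiableAt 𝕜 (fun s i => deriv (fun r => c r i) s) t :=
    differentiableAt_pi.2 fun i => (iff_deriv.1 (hc i)).2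
  exact iff_deriv.2 ⟨coord_eventually.mono fun _ hs => differentiableAt_pi.2 hs,
    coord_derivs.congr_of_eventuallyEq deriv_eq⟩

end TwiceDifferentiableAt

end TwiceDifferentiable

section PartialDerivatives

theorem sum_smul_map_single {R M ι : Type*} [Semiring R] [AddCommMonoid M] [Module R M]
    [Fintype ι] [DecidableEq ι] (L : (ι → R) →ₗ[R] M) (v : ι → R) :
    ∑ i, v i • L (Pi.single i 1) = L v := by
  simp only [← map_smul, ← map_sum, ← pi_eq_sum_univ']

variable {n : ℕ} {E : Type*} [NormedAddCommGroup E] [NormedSpace ℝ E]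
  {f : (Fin n → ℝ) → E} {x : Fin n → ℝ}

theorem sum_smul_dP (f : (Fin n → ℝ) → E) (x v : Fin n → ℝ) :
    ∑ i, v i • dP f x i = fderiv ℝ f x v :=
  sum_smul_map_single (fderiv ℝ f x).toLinearMap v

theorem dP_dP (hf : DifferentiableAt ℝ (fderiv ℝ f) x) (i j : Fin n) :
    dP (fun y => dP f y j) x i = dP (fderiv ℝ f) x i (Pi.single j 1) := by
  simp only [dP]
  rw [fderiv_clm_apply hf (differentiableAt_const _)]
  simp

theorem sum_sum_smul_dP_dP (hf : DifferentiableAt ℝ (fderiv ℝ f) x) (v w : Fin n → ℝ) :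
    ∑ i, ∑ j, (v i * w j) • dP (fun y => dP f y j) x i = fderiv ℝ (fderiv ℝ f) x v w := by
  have inner_sum (i : Fin n) :
      ∑ j, w j • dP (fun y => dP f y j) x i = dP (fderiv ℝ f) x i w := by
    simp only [dP_dP hf]
    exact sum_smul_map_single (dP (fderiv ℝ f) x i).toLinearMap w
  simp only [mul_smul, ← Finset.smul_sum, inner_sum]
  simp [← sum_smul_dP (fderiv ℝ f) x v]

end PartialDerivatives

section WeightedContraction

variable {R ι κ : Type*} [CommSemiring R] [Fintype ι] [Fintype κ]

theorem sum_sum_weight_mul_mul (w : B → R) (a : B → ι → R) (x : ι → R) :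
    ∑ i, (∑ ν, w ν * a ν i) * x i = ∑ ν, w ν * ∑ i, x i * a ν i := by
  simp only [Finset.sum_mul, Finset.mul_sum]
  rw [Finset.sum_comm]
  exact Finset.sum_congr rfl fun ν _ => Finset.sum_congr rfl fun i _ => by ring

theorem sum_sum_sum_weight_mul_mul (w : B → R) (a : B → ι → κ → R) (x : ι → R) (y : κ → R) :
    ∑ i, ∑ j, (∑ ν, w ν * a ν i j) * x i * y j =
      ∑ ν, w ν * ∑ i, ∑ j, x i * y j * a ν i j := by
  simpa only [Fintype.sum_prod_type, mul_assoc] using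
    sum_sum_weight_mul_mul w (fun ν (p : ι × κ) => a ν p.1 p.2) fun p => x p.1 * y p.2

theorem sum_sum_sum_weight_mul_mul_mul (w : B → R) (a : B → ι → R) (b : B → κ → R)
    (x : ι → R) (y : κ → R) :
    ∑ i, ∑ j, (∑ ν, w ν * (a ν i * b ν j)) * x i * y j =
      ∑ ν, w ν * ((∑ i, x i * a ν i) * ∑ j, y j * b ν j) := by
  simp only [sum_sum_sum_weight_mul_mul w (fun ν i j => a ν i * b ν j), Finset.sum_mul_sum,
    mul_mul_mul_comm]

end WeightedContraction

section FisherContraction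

variable (γ0 : B → ℝ) {ρ : (Fin P → ℝ) → B → ℝ} {ψ : (Fin Q → ℝ) → B → ℝ}
  {φ : Fin P → ℝ} {ϕ : Fin Q → ℝ}

theorem sum_gRho_mul (u : Fin P) (x : Fin P → ℝ) :
    ∑ v, gRho γ0 ρ φ u v * x v =
      ∑ ν, 2 / γ0 ν * Drho ρ φ ν u * fderiv ℝ (ρ · ν) φ x := by
  simp only [gRho, sum_sum_weight_mul_mul, ← sum_smul_dP, smul_eq_mul]
  rfl

theorem sum_Γrr_mul_mul (hρ : ∀ ν, DifferentiableAt ℝ (fderiv ℝ (ρ · ν)) φ) (u : Fin P)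
    (x y : Fin P → ℝ) :
    ∑ u', ∑ v', Γrr γ0 ρ φ u' v' u * x u' * y v' =
      ∑ ν, 2 / γ0 ν * Drho ρ φ ν u * fderiv ℝ (fderiv ℝ (ρ · ν)) φ x y := by
  simp only [Γrr, sum_sum_sum_weight_mul_mul, ← sum_sum_smul_dP_dP (hρ _), smul_eq_mul]
  rfl

theorem sum_Γppu_mul_mul (u : Fin P) (x y : Fin Q → ℝ) :
    ∑ q', ∑ r', Γppu γ0 ρ ψ φ ϕ q' r' u * x q' * y r' =
      -∑ ν, 2 / γ0 ν * ρ φ ν * Drho ρ φ ν u *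
        (fderiv ℝ (ψ · ν) ϕ x * fderiv ℝ (ψ · ν) ϕ y) := by
  simp only [Γppu, neg_mul, Finset.sum_neg_distrib, mul_assoc (_ * Drho ρ φ _ u),
    sum_sum_sum_weight_mul_mul_mul, ← sum_smul_dP, smul_eq_mul]
  rfl

theorem sum_gPsi_mul (q : Fin Q) (x : Fin Q → ℝ) :
    ∑ r, gPsi γ0 ρ ψ φ ϕ q r * x r =
      ∑ ν, 2 / γ0 ν * ρ φ ν ^ 2 * Dpsi ψ ϕ ν q * fderiv ℝ (ψ · ν) ϕ x := by
  simp only [gPsi, sum_sum_weight_mul_mul, ← sum_smul_dP, smul_eq_mul]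
  rfl

theorem sum_Γppq_mul_mul (hψ : ∀ ν, DifferentiableAt ℝ (fderiv ℝ (ψ · ν)) ϕ) (q : Fin Q)
    (x y : Fin Q → ℝ) :
    ∑ q', ∑ r', Γppq γ0 ρ ψ φ ϕ q' r' q * x q' * y r' =
      ∑ ν, 2 / γ0 ν * ρ φ ν ^ 2 * Dpsi ψ ϕ ν q * fderiv ℝ (fderiv ℝ (ψ · ν)) ϕ x y := by
  simp only [Γppq, sum_sum_sum_weight_mul_mul, ← sum_sum_smul_dP_dP (hψ _), smul_eq_mul]
  rfl

theorem sum_Γpuq_mul_mul (q : Fin Q) (x : Fin Q → ℝ) (y : Fin P → ℝ) :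
    ∑ q', ∑ u', Γpuq γ0 ρ ψ φ ϕ q' u' q * x q' * y u' =
      ∑ ν, 2 / γ0 ν * ρ φ ν * Dpsi ψ ϕ ν q *
        (fderiv ℝ (ψ · ν) ϕ x * fderiv ℝ (ρ · ν) φ y) := by
  have Γpuq_eq (q' : Fin Q) (u' : Fin P) : Γpuq γ0 ρ ψ φ ϕ q' u' q =
      ∑ ν, 2 / γ0 ν * ρ φ ν * Dpsi ψ ϕ ν q * (Dpsi ψ ϕ ν q' * Drho ρ φ ν u') :=
    Finset.sum_congr rfl fun ν _ => by ring
  simp only [Γpuq_eq, sum_sum_sum_weight_mul_mul_mul, ← sum_smul_dP, smul_eq_mul]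
  rfl

end FisherContraction

section Geodesic

variable (γ0 : B → ℝ) {ρ : (Fin P → ℝ) → B → ℝ} {ψ : (Fin Q → ℝ) → B → ℝ}
  {φc : ℝ → Fin P → ℝ} {ϕc : ℝ → Fin Q → ℝ} {ς : ℝ}

theorem magnitude_geodesic_expression_eq
    (hρ : ∀ ν, TwiceDifferentiableAt ℝ (ρ · ν) (φc ς))
    (hψ : ∀ ν, DifferentiableAt ℝ (ψ · ν) (ϕc ς))
    (hφc : TwiceDifferentiableAt ℝ φc ς) (hϕc : DifferentiableAt ℝ ϕc ς) (u : Fin P) :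
    (∑ v, gRho γ0 ρ (φc ς) u v * deriv (deriv (fun t => φc t v)) ς) +
      (∑ u', ∑ v', Γrr γ0 ρ (φc ς) u' v' u *
        deriv (fun t => φc t u') ς * deriv (fun t => φc t v') ς) +
      (∑ q', ∑ r', Γppu γ0 ρ ψ (φc ς) (ϕc ς) q' r' u *
        deriv (fun t => ϕc t q') ς * deriv (fun t => ϕc t r') ς) =
    ∑ ν, 2 / γ0 ν *
      (deriv (deriv (fun t => ρ (φc t) ν)) ς -
        ρ (φc ς) ν * deriv (fun t => ψ (ϕc t) ν) ς ^ 2) * Drho ρ (φc ς) ν u := by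
  have magnitude_accel (ν : B) : deriv (deriv fun t => ρ (φc t) ν) ς =
      fderiv ℝ (fderiv ℝ (ρ · ν)) (φc ς) (deriv φc ς) (deriv φc ς) +
        fderiv ℝ (ρ · ν) (φc ς) (deriv (deriv φc) ς) :=
    (hρ ν).deriv_deriv_comp hφc
  have phase_velocity (ν : B) :
      deriv (fun t => ψ (ϕc t) ν) ς = fderiv ℝ (ψ · ν) (ϕc ς) (deriv ϕc ς) :=
    fderiv_comp_deriv ς (hψ ν) hϕc
  simp only [hφc.deriv_deriv_coord, deriv_coord hφc.differentiableAt, deriv_coord hϕc]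
  rw [sum_gRho_mul, sum_Γrr_mul_mul γ0 fun ν => (hρ ν).2, sum_Γppu_mul_mul,
    ← Finset.sum_neg_distrib, ← Finset.sum_add_distrib, ← Finset.sum_add_distrib]
  refine Finset.sum_congr rfl fun ν _ => ?_
  rw [magnitude_accel, phase_velocity]
  ring

theorem phase_geodesic_expression_eq
    (hρ : ∀ ν, DifferentiableAt ℝ (ρ · ν) (φc ς))
    (hψ : ∀ ν, TwiceDifferentiableAt ℝ (ψ · ν) (ϕc ς))
    (hφc : DifferentiableAt ℝ φc ς) (hϕc : TwiceDifferentiableAt ℝ ϕc ς) (q : Fin Q) :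
    (∑ r, gPsi γ0 ρ ψ (φc ς) (ϕc ς) q r * deriv (deriv (fun t => ϕc t r)) ς) +
      (∑ q', ∑ r', Γppq γ0 ρ ψ (φc ς) (ϕc ς) q' r' q *
        deriv (fun t => ϕc t q') ς * deriv (fun t => ϕc t r') ς) +
      2 * (∑ q', ∑ u', Γpuq γ0 ρ ψ (φc ς) (ϕc ς) q' u' q *
        deriv (fun t => ϕc t q') ς * deriv (fun t => φc t u') ς) =
    ∑ ν, 2 / γ0 ν *
      (ρ (φc ς) ν ^ 2 * deriv (deriv (fun t => ψ (ϕc t) ν)) ς +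
        2 * ρ (φc ς) ν * deriv (fun t => ρ (φc t) ν) ς * deriv (fun t => ψ (ϕc t) ν) ς) *
      Dpsi ψ (ϕc ς) ν q := by
  have magnitude_velocity (ν : B) :
      deriv (fun t => ρ (φc t) ν) ς = fderiv ℝ (ρ · ν) (φc ς) (deriv φc ς) :=
    fderiv_comp_deriv ς (hρ ν) hφc
  have phase_velocity (ν : B) :
      deriv (fun t => ψ (ϕc t) ν) ς = fderiv ℝ (ψ · ν) (ϕc ς) (deriv ϕc ς) :=
    fderiv_comp_deriv ς (hψ ν).differentiableAt hϕc.differentiableAt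
  have phase_accel (ν : B) : deriv (deriv fun t => ψ (ϕc t) ν) ς =
      fderiv ℝ (fderiv ℝ (ψ · ν)) (ϕc ς) (deriv ϕc ς) (deriv ϕc ς) +
        fderiv ℝ (ψ · ν) (ϕc ς) (deriv (deriv ϕc) ς) :=
    (hψ ν).deriv_deriv_comp hϕc
  simp only [hϕc.deriv_deriv_coord, deriv_coord hϕc.differentiableAt, deriv_coord hφc]
  rw [sum_gPsi_mul, sum_Γppq_mul_mul γ0 fun ν => (hψ ν).2, sum_Γpuq_mul_mul,
    Finset.mul_sum, ← Finset.sum_add_distrib, ← Finset.sum_add_distrib]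
  refine Finset.sum_congr rfl fun ν _ => ?_
  rw [phase_accel, phase_velocity, magnitude_velocity]
  ring

end Geodesic

theorem stmt4_general (γ0 : B → ℝ) (_hγ0 : ∀ ν, γ0 ν ≠ 0)
    (ρ : (Fin P → ℝ) → B → ℝ) (ψ : (Fin Q → ℝ) → B → ℝ)
    (φc : ℝ → Fin P → ℝ) (ϕc : ℝ → Fin Q → ℝ) (ς : ℝ)
    (hρ : ∀ ν, TwiceDifferentiableAt ℝ (fun φ => ρ φ ν) (φc ς))
    (hψ : ∀ ν, TwiceDifferentiableAt ℝ (fun ϕ => ψ ϕ ν) (ϕc ς))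
    (hφc : TwiceDifferentiableAt ℝ φc ς) (hϕc : TwiceDifferentiableAt ℝ ϕc ς) :
    GeodesicSystem γ0 ρ ψ φc ϕc ς ↔
      ((∀ u : Fin P,
          ∑ ν : B, (2 / γ0 ν) *
            (deriv (deriv (fun t => ρ (φc t) ν)) ς -
              ρ (φc ς) ν * (deriv (fun t => ψ (ϕc t) ν) ς) ^ 2) *
            Drho ρ (φc ς) ν u = 0) ∧
       (∀ q : Fin Q,
          ∑ ν : B, (2 / γ0 ν) *
            ((ρ (φc ς) ν) ^ 2 * deriv (deriv (fun t => ψ (ϕc t) ν)) ς +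
              2 * ρ (φc ς) ν * deriv (fun t => ρ (φc t) ν) ς *
                deriv (fun t => ψ (ϕc t) ν) ς) *
            Dpsi ψ (ϕc ς) ν q = 0)) := by
  have hρ₁ (ν : B) := (hρ ν).differentiableAt
  have hψ₁ (ν : B) := (hψ ν).differentiableAt
  simp only [GeodesicSystem,
    magnitude_geodesic_expression_eq γ0 hρ hψ₁ hφc hϕc.differentiableAt,
    phase_geodesic_expression_eq γ0 hρ₁ hψ hφc.differentiableAt hϕc]

/-- The geodesic system of the Fisher metric is equivalent to the reduced vector equations
combining the magnitude `r(ς,ν) = ρ(φ(ς),ν)` and the phase `p(ς,ν) = ψ(ϕ(ς),ν)`. -/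
theorem stmt4 {P Q : ℕ} {B : Type*} [Fintype B] [Nonempty B]
    (γ0 : B → ℝ) (hγ0 : ∀ ν, 0 < γ0 ν)
    (ρ : (Fin P → ℝ) → B → ℝ) (ψ : (Fin Q → ℝ) → B → ℝ)
    (hρpos : ∀ φ ν, 0 < ρ φ ν)
    (hρ : ∀ ν, ContDiff ℝ 2 (fun φ => ρ φ ν))
    (hψ : ∀ ν, ContDiff ℝ 2 (fun ϕ => ψ ϕ ν))
    (φc : ℝ → Fin P → ℝ) (ϕc : ℝ → Fin Q → ℝ)
    (hφc : ∀ v, Differentiable ℝ (fun ς => φc ς v))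
    (hφc' : ∀ v, Differentiable ℝ (deriv (fun ς => φc ς v)))
    (hϕc : ∀ q, Differentiable ℝ (fun ς => ϕc ς q))
    (hϕc' : ∀ q, Differentiable ℝ (deriv (fun ς => ϕc ς q)))
    (ς : ℝ) :
    GeodesicSystem γ0 ρ ψ φc ϕc ς ↔
      ((∀ u : Fin P,
          ∑ ν : B, (2 / γ0 ν) *
            (deriv (deriv (fun t => ρ (φc t) ν)) ς -
              ρ (φc ς) ν * (deriv (fun t => ψ (ϕc t) ν) ς)^2) *
            Drho ρ (φc ς) ν u = 0) ∧
       (∀ q : Fin Q,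
          ∑ ν : B, (2 / γ0 ν) *
            ((ρ (φc ς) ν)^2 * deriv (deriv (fun t => ψ (ϕc t) ν)) ς +
              2 * ρ (φc ς) ν * deriv (fun t => ρ (φc t) ν) ς *
                deriv (fun t => ψ (ϕc t) ν) ς) *
            Dpsi ψ (ϕc ς) ν q = 0)) := by
  exact stmt4_general γ0 (fun ν => (hγ0 ν).ne') ρ ψ φc ϕc ς
    (fun ν => .of_contDiffAt (hρ ν).contDiffAt) (fun ν => .of_contDiffAt (hψ ν).contDiffAt)
    (.of_coord fun v => TwiceDifferentiableAt.iff_deriv.2 ⟨.of_forall (hφc v), hφc' v ς⟩)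
    (.of_coord fun q => TwiceDifferentiableAt.iff_deriv.2 ⟨.of_forall (hϕc q), hϕc' q ς⟩)
end
end

section
/- Let ς ↦ (α(ς), ϕ(ς)) be a twice differentiable curve with α(ς) > 0, and write p(ς,ν) := Σ_{r=2}^{N} ϕ^r(ς)·ν^(r−2) for ν ∈ B. Then the reduced geodesic equations on L2(B,α) in the form 'Σ_{ν∈B} (2/γ0(ν))·( α''·ρ0(ν) − α·ρ0(ν)·(∂p/∂ς)² )·ρ0(ν) = 0 and, for every q ∈ {2,…,N}, Σ_{ν∈B} (2/γ0(ν))·ρ0(ν)²·( α²·∂²p/∂ς² + 2·α·α'·∂p/∂ς )·ν^(q−2) = 0' hold at ς if and only if: α''(ς) − α(ς)·(1/ω0)·Σ_{ν∈B} w(ν)·(∂p/∂ς(ς,ν))² = 0, and for every ν ∈ B, α(ς)·∂²p/∂ς²(ς,ν) + 2·α'(ς)·∂p/∂ς(ς,ν) = 0. -/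
/-- The polynomial phase model `p(ς,ν) = Σ_{r} ϕ^r(ς)·ν^r` (with `M` coefficients,
indexing the coefficients of `ν^(r−2)`, `r = 2,…,N`, by `Fin M`). -/
noncomputable def pphase {M : ℕ} (ϕc : ℝ → Fin M → ℝ) (ς ν : ℝ) : ℝ :=
  ∑ r : Fin M, ϕc ς r * ν ^ (r : ℕ)

/-!
At a fixed `ς` both systems are algebraic in the values of the derivatives. The summed magnitude
equation is `ω0` times the pointwise one. The summed phase equations say that
`f = α p'' + 2 α' p'` is orthogonal to every `ν ↦ ν ^ q` for the positive definite form
`∑ ν ∈ B, w ν * f ν * g ν` on functions `B → ℝ`. Since `f` is itself a combination of these powers,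
it is orthogonal to itself, so it vanishes on `B`.
-/

section WeightedSums

variable {K β κ : Type*} [Field K] {B : Finset β} {w : β → K}

theorem sum_mul_sub_eq_zero_iff (hw : ∑ ν ∈ B, w ν ≠ 0) (a c : K) (g : β → K) :
    ∑ ν ∈ B, w ν * (c - a * g ν) = 0 ↔
      c - a * (1 / ∑ ν ∈ B, w ν) * ∑ ν ∈ B, w ν * g ν = 0 := by
  have sum_eq : ∑ ν ∈ B, w ν * (c - a * g ν) =
      (∑ ν ∈ B, w ν) * (c - a * (1 / ∑ ν ∈ B, w ν) * ∑ ν ∈ B, w ν * g ν) := calc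
    _ = (∑ ν ∈ B, w ν) * c - a * ∑ ν ∈ B, w ν * g ν := by
      rw [Finset.sum_mul, Finset.mul_sum, ← Finset.sum_sub_distrib]
      exact Finset.sum_congr rfl fun ν _ => by ring
    _ = _ := by field_simp
  rw [sum_eq, mul_eq_zero_iff_left hw]

theorem sum_mul_mul_eq_zero_of_mem_span {b : κ → β → K} {f g : β → K}
    (hf : ∀ q, ∑ ν ∈ B, w ν * f ν * b q ν = 0) (hg : g ∈ Submodule.span K (Set.range b)) :
    ∑ ν ∈ B, w ν * f ν * g ν = 0 := by
  induction hg using Submodule.span_induction with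
  | mem _ h =>
    obtain ⟨q, rfl⟩ := h
    exact hf q
  | zero => simp
  | add g₁ g₂ _ _ h₁ h₂ => simp [mul_add, Finset.sum_add_distrib, h₁, h₂]
  | smul c g _ h => simp [mul_left_comm _ c, ← Finset.mul_sum, h]

variable [LinearOrder K] [IsStrictOrderedRing K]

theorem forall_sum_mul_mul_eq_zero_iff_of_mem_span (hw : ∀ ν ∈ B, 0 < w ν) {b : κ → β → K}
    {f : β → K} (hf : f ∈ Submodule.span K (Set.range b)) :
    (∀ q, ∑ ν ∈ B, w ν * f ν * b q ν = 0) ↔ ∀ ν ∈ B, f ν = 0 := by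
  refine ⟨fun horth ν hν => ?_, fun hzero q => Finset.sum_eq_zero fun ν hν => by simp [hzero ν hν]⟩
  have hself : ∑ ν ∈ B, w ν * (f ν * f ν) = 0 := by
    simpa only [mul_assoc] using sum_mul_mul_eq_zero_of_mem_span horth hf
  have hterm : w ν * (f ν * f ν) = 0 :=
    (Finset.sum_eq_zero_iff_of_nonneg fun μ hμ =>
      mul_nonneg (hw μ hμ).le (mul_self_nonneg _)).1 hself ν hν
  exact mul_self_eq_zero.1 ((mul_eq_zero_iff_left (hw ν hν).ne').1 hterm)

end WeightedSums

section PolynomialPhase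

variable {M : ℕ}

theorem pphase_mem_span (ϕc : ℝ → Fin M → ℝ) (ς : ℝ) :
    pphase ϕc ς ∈ Submodule.span ℝ (Set.range fun (r : Fin M) (ν : ℝ) => ν ^ (r : ℕ)) :=
  (Submodule.mem_span_range_iff_exists_fun ℝ).2
    ⟨ϕc ς, by ext ν; simp [pphase, Finset.sum_apply]⟩

theorem deriv_pphase {ϕc : ℝ → Fin M → ℝ} (hϕc : ∀ r, Differentiable ℝ fun ς => ϕc ς r) (ν : ℝ) :
    deriv (fun t => pphase ϕc t ν) =
      fun t => pphase (fun s r => deriv (fun u => ϕc u r) s) t ν := by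
  funext t
  exact (HasDerivAt.fun_sum fun r _ => (hϕc r t).hasDerivAt.mul_const (ν ^ (r : ℕ))).deriv

end PolynomialPhase

/-- `b` is the family of phase functions, generalizing `ν ↦ ν ^ q`; `a`, `a'`, `a''` are the values
of `α`, `α'`, `α''` at `ς`, and `p'`, `p''` those of `∂p/∂ς`, `∂²p/∂ς²` as functions of the bin. -/
theorem stmt8_general {K β κ : Type*} [Field K] [LinearOrder K] [IsStrictOrderedRing K]
    {B : Finset β} (hB : B.Nonempty) {γ0 ρ0 w : β → K}
    (hγ0 : ∀ ν ∈ B, 0 < γ0 ν) (hρ0 : ∀ ν ∈ B, ρ0 ν ≠ 0)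
    (hw : ∀ ν ∈ B, w ν = 2 * ρ0 ν ^ 2 / γ0 ν) {a : K} (ha : a ≠ 0) (a' a'' : K)
    {b : κ → β → K} {p' p'' : β → K}
    (hp' : p' ∈ Submodule.span K (Set.range b)) (hp'' : p'' ∈ Submodule.span K (Set.range b)) :
    (∑ ν ∈ B, 2 / γ0 ν * (a'' * ρ0 ν - a * ρ0 ν * p' ν ^ 2) * ρ0 ν = 0 ∧
      ∀ q, ∑ ν ∈ B, 2 / γ0 ν * ρ0 ν ^ 2 * (a ^ 2 * p'' ν + 2 * a * a' * p' ν) * b q ν = 0) ↔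
    (a'' - a * (1 / ∑ ν ∈ B, w ν) * ∑ ν ∈ B, w ν * p' ν ^ 2 = 0 ∧
      ∀ ν ∈ B, a * p'' ν + 2 * a' * p' ν = 0) := by
  have hwpos : ∀ ν ∈ B, 0 < w ν := fun ν hν => by
    have := hγ0 ν hν
    have := hρ0 ν hν
    rw [hw ν hν]
    positivity
  refine and_congr ?_ ?_
  · rw [← sum_mul_sub_eq_zero_iff (Finset.sum_pos hwpos hB).ne']
    refine Eq.congr_left (Finset.sum_congr rfl fun ν hν => ?_)
    rw [hw ν hν]
    ring
  · have hmem : a • p'' + (2 * a') • p' ∈ Submodule.span K (Set.range b) :=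
      add_mem (Submodule.smul_mem _ _ hp'') (Submodule.smul_mem _ _ hp')
    have hsum (q : κ) :
        ∑ ν ∈ B, 2 / γ0 ν * ρ0 ν ^ 2 * (a ^ 2 * p'' ν + 2 * a * a' * p' ν) * b q ν =
          a * ∑ ν ∈ B, w ν * (a • p'' + (2 * a') • p') ν * b q ν := by
      rw [Finset.mul_sum]
      refine Finset.sum_congr rfl fun ν hν => ?_
      simp only [hw ν hν, Pi.add_apply, Pi.smul_apply, smul_eq_mul]
      ring
    simp only [hsum, mul_eq_zero_iff_left ha]
    exact forall_sum_mul_mul_eq_zero_iff_of_mem_span hwpos hmem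

/-- Equivalence between the reduced geodesic equations on `L2(B,α)` in summed form and
their pointwise form. -/
theorem stmt8 {M : ℕ} (B : Finset ℝ) (hB : B.Nonempty)
    (γ0 ρ0 : ℝ → ℝ) (hγ0 : ∀ ν ∈ B, 0 < γ0 ν) (hρ0 : ∀ ν ∈ B, 0 < ρ0 ν)
    (w : ℝ → ℝ) (hw : ∀ ν, w ν = 2 * (ρ0 ν)^2 / γ0 ν)
    (ω0 : ℝ) (hω0 : ω0 = ∑ ν ∈ B, w ν)
    (α : ℝ → ℝ) (hα : Differentiable ℝ α) (hα' : Differentiable ℝ (deriv α))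
    (hαpos : ∀ ς, 0 < α ς)
    (ϕc : ℝ → Fin M → ℝ)
    (hϕc : ∀ r, Differentiable ℝ (fun ς => ϕc ς r))
    (hϕc' : ∀ r, Differentiable ℝ (deriv (fun ς => ϕc ς r)))
    (ς : ℝ) :
    ((∑ ν ∈ B, (2 / γ0 ν) *
        (deriv (deriv α) ς * ρ0 ν -
          α ς * ρ0 ν * (deriv (fun t => pphase ϕc t ν) ς)^2) * ρ0 ν = 0) ∧
     (∀ q : Fin M, ∑ ν ∈ B, (2 / γ0 ν) * (ρ0 ν)^2 *
        ((α ς)^2 * deriv (deriv (fun t => pphase ϕc t ν)) ς +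
          2 * α ς * deriv α ς * deriv (fun t => pphase ϕc t ν) ς) * ν ^ (q : ℕ) = 0))
    ↔
    ((deriv (deriv α) ς -
        α ς * (1 / ω0) * ∑ ν ∈ B, w ν * (deriv (fun t => pphase ϕc t ν) ς)^2 = 0) ∧
     (∀ ν ∈ B, α ς * deriv (deriv (fun t => pphase ϕc t ν)) ς +
        2 * deriv α ς * deriv (fun t => pphase ϕc t ν) ς = 0)) := by
  simp only [hω0, deriv_pphase hϕc, deriv_pphase hϕc']
  exact stmt8_general hB hγ0 (fun ν hν => (hρ0 ν hν).ne') (fun ν _ => hw ν) (hαpos ς).ne' _ _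
    (pphase_mem_span _ ς) (pphase_mem_span _ ς)
end

section
/- With k1, k2, K as defined from α1, α2 and δ, the arctangent identity holds: arctan( k1·(k2 + 1)/√K ) − arctan( k1·k2/√K ) = δ. Equivalently, arctan( (α2 − α1·cos δ)/(α1·sin δ) ) − arctan( (α2·cos δ − α1)/(α2·sin δ) ) = δ. -/
/-- `k1 = α1² + α2² − 2·α1·α2·cos δ`. -/
noncomputable def k1c (α1 α2 δ : ℝ) : ℝ := α1^2 + α2^2 - 2*α1*α2*Real.cos δ

/-- `k2 = (−α1² + α1·α2·cos δ)/k1`. -/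
noncomputable def k2c (α1 α2 δ : ℝ) : ℝ := (-α1^2 + α1*α2*Real.cos δ) / k1c α1 α2 δ

/-- `K = α1²·α2²·(sin δ)²`. -/
noncomputable def Kc (α1 α2 δ : ℝ) : ℝ := α1^2 * α2^2 * (Real.sin δ)^2

/-!
Write `y = (α2 cos δ - α1) / (α2 sin δ)`. By the addition formula,
`tan (arctan y + δ) = (y cos δ + sin δ) / (cos δ - y sin δ)`, which simplifies to
`(α2 - α1 cos δ) / (α1 sin δ)`. Since `cos δ - y sin δ = α1 / α2` is positive, so is
`cos (arctan y + δ)`; hence `arctan y + δ` lies in the principal branch `(-π/2, π/2)` and is the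
arctangent of its tangent. Clearing denominators, the arguments built from `k1`, `k2` and `K` are
these same two quotients.
-/

section Arctan

open Real

theorem abs_lt_pi_div_two_of_cos_pos {x : ℝ} (hx : |x| ≤ π + π / 2) (hcos : 0 < cos x) :
    |x| < π / 2 := by
  by_contra! hle
  have hcos_nonpos : cos |x| ≤ 0 := cos_nonpos_of_pi_div_two_le_of_le hle hx
  rw [cos_abs] at hcos_nonpos
  exact hcos.not_ge hcos_nonpos

theorem sin_arctan_eq_mul_cos_arctan (y : ℝ) : sin (arctan y) = y * cos (arctan y) := by
  rw [← tan_mul_cos (cos_arctan_pos y).ne', tan_arctan]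

theorem cos_arctan_add (y δ : ℝ) :
    cos (arctan y + δ) = cos (arctan y) * (cos δ - y * sin δ) := by
  rw [cos_add, sin_arctan_eq_mul_cos_arctan]
  ring

theorem sin_arctan_add (y δ : ℝ) :
    sin (arctan y + δ) = cos (arctan y) * (y * cos δ + sin δ) := by
  rw [sin_add, sin_arctan_eq_mul_cos_arctan]
  ring

theorem tan_arctan_add (y δ : ℝ) :
    tan (arctan y + δ) = (y * cos δ + sin δ) / (cos δ - y * sin δ) := by
  rw [tan_eq_sin_div_cos, sin_arctan_add, cos_arctan_add,
    mul_div_mul_left _ _ (cos_arctan_pos y).ne']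

theorem arctan_add_eq_arctan {y δ : ℝ} (hδ : |δ| ≤ π) (hpos : 0 < cos δ - y * sin δ) :
    arctan y + δ = arctan ((y * cos δ + sin δ) / (cos δ - y * sin δ)) := by
  have hcos : 0 < cos (arctan y + δ) := by
    rw [cos_arctan_add]
    exact mul_pos (cos_arctan_pos y) hpos
  have harctan : |arctan y| < π / 2 :=
    abs_lt.2 ⟨neg_pi_div_two_lt_arctan y, arctan_lt_pi_div_two y⟩
  have hrange : |arctan y + δ| ≤ π + π / 2 := by
    linarith [abs_add_le (arctan y) δ]
  obtain ⟨hlower, hupper⟩ := abs_lt.1 (abs_lt_pi_div_two_of_cos_pos hrange hcos)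
  rw [← tan_arctan_add, arctan_tan hlower hupper]

theorem arctan_sub_arctan_eq_of_mul_pos {a b δ : ℝ} (hab : 0 < a * b) (hδ : |δ| ≤ π)
    (hsin : sin δ ≠ 0) :
    arctan ((b - a * cos δ) / (a * sin δ)) - arctan ((b * cos δ - a) / (b * sin δ)) = δ := by
  have ha : a ≠ 0 := left_ne_zero_of_mul hab.ne'
  have hb : b ≠ 0 := right_ne_zero_of_mul hab.ne'
  set y := (b * cos δ - a) / (b * sin δ) with hy
  have hden : cos δ - y * sin δ = a / b := by
    rw [hy]
    field_simp
    ring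
  have hnum : y * cos δ + sin δ = (b - a * cos δ) / (b * sin δ) := by
    rw [hy]
    field_simp
    linear_combination b * sin_sq_add_cos_sq δ
  have hpos : 0 < cos δ - y * sin δ := by
    rw [hden]
    exact div_pos_iff.2 (mul_pos_iff.1 hab)
  have hquot : (b - a * cos δ) / (b * sin δ) / (a / b) = (b - a * cos δ) / (a * sin δ) := by
    field_simp
  rw [sub_eq_iff_eq_add', arctan_add_eq_arctan hδ hpos, hnum, hden, hquot]

end Arctan

section Constants

theorem k1c_eq_sq_add_sq (α1 α2 δ : ℝ) :
    k1c α1 α2 δ = (α2 - α1 * Real.cos δ) ^ 2 + (α1 * Real.sin δ) ^ 2 := by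
  rw [k1c]
  linear_combination -α1 ^ 2 * Real.sin_sq_add_cos_sq δ

variable {α1 α2 δ : ℝ}

theorem k1c_pos (hα1 : α1 ≠ 0) (hsin : Real.sin δ ≠ 0) : 0 < k1c α1 α2 δ := by
  rw [k1c_eq_sq_add_sq]
  positivity

theorem k1c_mul_k2c (hk1 : k1c α1 α2 δ ≠ 0) :
    k1c α1 α2 δ * k2c α1 α2 δ = α1 * (α2 * Real.cos δ - α1) := by
  rw [k2c, mul_div_cancel₀ _ hk1]
  ring

theorem k1c_mul_k2c_add_one (hk1 : k1c α1 α2 δ ≠ 0) :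
    k1c α1 α2 δ * (k2c α1 α2 δ + 1) = α2 * (α2 - α1 * Real.cos δ) := by
  rw [mul_add_one, k1c_mul_k2c hk1, k1c]
  ring

theorem sqrt_Kc (hα : 0 ≤ α1 * α2) (hsin : 0 ≤ Real.sin δ) :
    √(Kc α1 α2 δ) = α1 * α2 * Real.sin δ := by
  rw [Kc, ← mul_pow, ← mul_pow, Real.sqrt_sq (mul_nonneg hα hsin)]

theorem k1c_mul_k2c_div_sqrt_Kc (hα : 0 < α1 * α2) (hsin : 0 < Real.sin δ) :
    k1c α1 α2 δ * k2c α1 α2 δ / √(Kc α1 α2 δ) =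
      (α2 * Real.cos δ - α1) / (α2 * Real.sin δ) := by
  have hα1 : α1 ≠ 0 := left_ne_zero_of_mul hα.ne'
  rw [k1c_mul_k2c (k1c_pos hα1 hsin.ne').ne', sqrt_Kc hα.le hsin.le, mul_assoc,
    mul_div_mul_left _ _ hα1]

theorem k1c_mul_k2c_add_one_div_sqrt_Kc (hα : 0 < α1 * α2) (hsin : 0 < Real.sin δ) :
    k1c α1 α2 δ * (k2c α1 α2 δ + 1) / √(Kc α1 α2 δ) =
      (α2 - α1 * Real.cos δ) / (α1 * Real.sin δ) := by
  have hα1 : α1 ≠ 0 := left_ne_zero_of_mul hα.ne'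
  have hα2 : α2 ≠ 0 := right_ne_zero_of_mul hα.ne'
  rw [k1c_mul_k2c_add_one (k1c_pos hα1 hsin.ne').ne', sqrt_Kc hα.le hsin.le, mul_comm α1 α2,
    mul_assoc, mul_div_mul_left _ _ hα2]

end Constants

/-- The arctangent identity satisfied by the constants of the geodesic on `L2(B,α)`. -/
theorem stmt12 (α1 α2 δ : ℝ) (h1 : 0 < α1) (h2 : 0 < α2)
    (hδ : δ ∈ Set.Ioo 0 Real.pi) :
    Real.arctan (k1c α1 α2 δ * (k2c α1 α2 δ + 1) / Real.sqrt (Kc α1 α2 δ)) -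
      Real.arctan (k1c α1 α2 δ * k2c α1 α2 δ / Real.sqrt (Kc α1 α2 δ)) = δ ∧
    Real.arctan ((α2 - α1 * Real.cos δ) / (α1 * Real.sin δ)) -
      Real.arctan ((α2 * Real.cos δ - α1) / (α2 * Real.sin δ)) = δ := by
  have hα : 0 < α1 * α2 := mul_pos h1 h2
  have hsin : 0 < Real.sin δ := Real.sin_pos_of_mem_Ioo hδ
  have habs : |δ| ≤ Real.pi := (abs_of_pos hδ.1).trans_le hδ.2.le
  rw [k1c_mul_k2c_add_one_div_sqrt_Kc hα hsin, k1c_mul_k2c_div_sqrt_Kc hα hsin, and_self]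
  exact arctan_sub_arctan_eq_of_mul_pos hα habs hsin.ne'
end

section
/- Let w : B → ℝ with w(ν) > 0, ω0 := Σ_{ν∈B} w(ν), and let Δψ : B → ℝ satisfy |Δψ(ν)| ≤ π for all ν ∈ B. Then (1/ω0)·Σ_{ν∈B} w(ν)·cos(Δψ(ν)) ≥ cos( √( (1/ω0)·Σ_{ν∈B} w(ν)·Δψ(ν)² ) ). Consequently, for every γ > 0, the Fisher–Rao distance on the full manifold is no larger than that on the submanifold: √( γ² + 1 − 2·γ·(1/ω0)·Σ w(ν)·cos(Δψ(ν)) ) ≤ √( γ² + 1 − 2·γ·cos( √( (1/ω0)·Σ w(ν)·Δψ(ν)² ) ) ), i.e. d_{L2,B} ≤ d_{L2,B,α}. -/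
/-!
Since `d/dx cos √x = -sinc (√x) / 2` and `sinc` decreases on `[0, π]`, the function `cos √x` is
convex on `[0, π²]`, and Jensen's inequality at the points `θᵢ²` gives the claim when every
`|θᵢ| ≤ π`. It is enough that the mean of the `θᵢ²` be at most `π²`: replacing `|θᵢ|` by
`min |θᵢ| π` lowers both `cos θᵢ` and the quadratic mean, and `cos` decreases on `[0, π]`.
-/

open Real Set

theorem antitoneOn_sinc : AntitoneOn sinc (Icc 0 π) := by
  intro x hx y hy hxy
  obtain rfl | x_pos := hx.1.eq_or_lt
  · simpa only [sinc_zero] using sinc_le_one y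
  have y_pos : 0 < y := x_pos.trans_le hxy
  have slope_le : slope sin 0 y ≤ slope sin 0 x :=
    strictConcaveOn_sin_Icc.concaveOn.antitoneOn_slope_gt (left_mem_Icc.2 pi_pos.le)
      ⟨hx, x_pos⟩ ⟨hy, y_pos⟩ hxy
  simpa only [sinc_of_ne_zero x_pos.ne', sinc_of_ne_zero y_pos.ne', slope_def_field, sin_zero,
    sub_zero] using slope_le

theorem hasDerivAt_cos_sqrt {x : ℝ} (hx : 0 < x) :
    HasDerivAt (fun x ↦ cos √x) (-sinc √x / 2) x := by
  convert! (hasDerivAt_sqrt hx.ne').cos using 1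
  rw [sinc_of_ne_zero (sqrt_pos.2 hx).ne']
  ring

theorem convexOn_cos_sqrt : ConvexOn ℝ (Icc 0 (π ^ 2)) (fun x ↦ cos √x) := by
  have sqrt_mem {x : ℝ} (hx : x ∈ Ioo 0 (π ^ 2)) : √x ∈ Icc 0 π :=
    ⟨sqrt_nonneg x, (sqrt_le_left pi_pos.le).2 hx.2.le⟩
  refine MonotoneOn.convexOn_of_deriv (convex_Icc _ _)
    (continuous_cos.comp continuous_sqrt).continuousOn ?_ ?_ <;> rw [interior_Icc]
  · exact fun x hx ↦ (hasDerivAt_cos_sqrt hx.1).differentiableAt.differentiableWithinAt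
  · intro x hx y hy hxy
    rw [(hasDerivAt_cos_sqrt hx.1).deriv, (hasDerivAt_cos_sqrt hy.1).deriv]
    have sinc_le : sinc √y ≤ sinc √x :=
      antitoneOn_sinc (sqrt_mem hx) (sqrt_mem hy) (sqrt_le_sqrt hxy)
    linarith

theorem cos_min_abs_pi_le_cos (θ : ℝ) : cos (min |θ| π) ≤ cos θ := by
  obtain h | h := le_total |θ| π
  · rw [min_eq_left h, cos_abs]
  · simpa only [min_eq_right h, cos_pi] using neg_one_le_cos θ

section WeightedMean

variable {ι : Type*} {s : Finset ι} {w θ : ι → ℝ}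

theorem weighted_mean_sq_le_sq_of_abs_le {C : ℝ} (hw : ∀ i ∈ s, 0 ≤ w i)
    (hw_sum : 0 < ∑ i ∈ s, w i) (hθ : ∀ i ∈ s, |θ i| ≤ C) :
    (1 / ∑ i ∈ s, w i) * ∑ i ∈ s, w i * θ i ^ 2 ≤ C ^ 2 := by
  rw [one_div_mul_eq_div, div_le_iff₀' hw_sum, Finset.sum_mul]
  exact Finset.sum_le_sum fun i hi ↦
    mul_le_mul_of_nonneg_left (sq_le_sq.2 ((hθ i hi).trans (le_abs_self C))) (hw i hi)

theorem cos_sqrt_weighted_mean_sq_le_of_abs_le_pi (hw : ∀ i ∈ s, 0 ≤ w i)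
    (hw_sum : 0 < ∑ i ∈ s, w i) (hθ : ∀ i ∈ s, |θ i| ≤ π) :
    cos √((1 / ∑ i ∈ s, w i) * ∑ i ∈ s, w i * θ i ^ 2) ≤
      (1 / ∑ i ∈ s, w i) * ∑ i ∈ s, w i * cos (θ i) := by
  have sq_mem : ∀ i ∈ s, θ i ^ 2 ∈ Icc 0 (π ^ 2) := fun i hi ↦
    ⟨sq_nonneg _, sq_le_sq.2 ((hθ i hi).trans (le_abs_self π))⟩
  simpa only [Finset.centerMass, Function.comp_def, smul_eq_mul, sqrt_sq_eq_abs, cos_abs, one_div]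
    using convexOn_cos_sqrt.map_centerMass_le hw hw_sum sq_mem

theorem cos_sqrt_weighted_mean_sq_le (hw : ∀ i ∈ s, 0 ≤ w i) (hw_sum : 0 < ∑ i ∈ s, w i)
    (hθ : (1 / ∑ i ∈ s, w i) * ∑ i ∈ s, w i * θ i ^ 2 ≤ π ^ 2) :
    cos √((1 / ∑ i ∈ s, w i) * ∑ i ∈ s, w i * θ i ^ 2) ≤
      (1 / ∑ i ∈ s, w i) * ∑ i ∈ s, w i * cos (θ i) := by
  have min_nonneg (i : ι) : 0 ≤ min |θ i| π := le_min (abs_nonneg _) pi_pos.le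
  have min_sq_le (i : ι) : min |θ i| π ^ 2 ≤ θ i ^ 2 :=
    sq_le_sq.2 ((abs_of_nonneg (min_nonneg i)).trans_le (min_le_left _ _))
  have min_le_pi : ∀ i ∈ s, |min |θ i| π| ≤ π := fun i _ ↦
    (abs_of_nonneg (min_nonneg i)).trans_le (min_le_right _ _)
  calc
    cos √((1 / ∑ i ∈ s, w i) * ∑ i ∈ s, w i * θ i ^ 2)
    _ ≤ cos √((1 / ∑ i ∈ s, w i) * ∑ i ∈ s, w i * min |θ i| π ^ 2) := by
      refine cos_le_cos_of_nonneg_of_le_pi (sqrt_nonneg _) ((sqrt_le_left pi_pos.le).2 hθ) ?_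
      gcongr √(_ * ∑ i ∈ s, _ * ?_) with i hi
      exacts [hw i hi, min_sq_le i]
    _ ≤ (1 / ∑ i ∈ s, w i) * ∑ i ∈ s, w i * cos (min |θ i| π) :=
      cos_sqrt_weighted_mean_sq_le_of_abs_le_pi hw hw_sum min_le_pi
    _ ≤ (1 / ∑ i ∈ s, w i) * ∑ i ∈ s, w i * cos (θ i) := by
      gcongr with i hi
      exacts [hw i hi, cos_min_abs_pi_le_cos (θ i)]

theorem stmt18_general (hw : ∀ i ∈ s, 0 ≤ w i) (hw_sum : 0 < ∑ i ∈ s, w i)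
    (hθ : (1 / ∑ i ∈ s, w i) * ∑ i ∈ s, w i * θ i ^ 2 ≤ π ^ 2) :
    (1 / ∑ i ∈ s, w i) * ∑ i ∈ s, w i * cos (θ i) ≥
        cos √((1 / ∑ i ∈ s, w i) * ∑ i ∈ s, w i * θ i ^ 2) ∧
      ∀ γ : ℝ, 0 < γ →
        √(γ ^ 2 + 1 - 2 * γ * ((1 / ∑ i ∈ s, w i) * ∑ i ∈ s, w i * cos (θ i))) ≤
          √(γ ^ 2 + 1 - 2 * γ * cos √((1 / ∑ i ∈ s, w i) * ∑ i ∈ s, w i * θ i ^ 2)) := by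
  have cos_le := cos_sqrt_weighted_mean_sq_le hw hw_sum hθ
  refine ⟨cos_le, fun γ hγ ↦ ?_⟩
  gcongr

end WeightedMean

/-- Jensen-type inequality for the phases: the weighted mean of `cos∘Δψ` dominates
`cos` of the weighted quadratic mean of `Δψ`; consequently, the Fisher–Rao distance on
the full manifold `L2(B)` is no larger than that on the submanifold `L2(B,α)`. -/
theorem stmt18 {B : Type*} [Fintype B] [Nonempty B]
    (w : B → ℝ) (hw : ∀ ν, 0 < w ν)
    (ω0 : ℝ) (hω0 : ω0 = ∑ ν : B, w ν)
    (Δψ : B → ℝ) (hΔψ : ∀ ν, |Δψ ν| ≤ Real.pi) :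
    ((1 / ω0) * ∑ ν : B, w ν * Real.cos (Δψ ν)
        ≥ Real.cos (Real.sqrt ((1 / ω0) * ∑ ν : B, w ν * (Δψ ν)^2))) ∧
    (∀ γ : ℝ, 0 < γ →
      Real.sqrt (γ^2 + 1 - 2 * γ * ((1 / ω0) * ∑ ν : B, w ν * Real.cos (Δψ ν)))
        ≤ Real.sqrt (γ^2 + 1 -
            2 * γ * Real.cos (Real.sqrt ((1 / ω0) * ∑ ν : B, w ν * (Δψ ν)^2)))) := by
  subst hω0
  have hw_nonneg : ∀ ν ∈ Finset.univ, 0 ≤ w ν := fun ν _ ↦ (hw ν).le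
  have hw_sum : 0 < ∑ ν, w ν := Finset.sum_pos (fun ν _ ↦ hw ν) Finset.univ_nonempty
  exact stmt18_general hw_nonneg hw_sum
    (weighted_mean_sq_le_sq_of_abs_le hw_nonneg hw_sum fun ν _ ↦ hΔψ ν)
end
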